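/- Let G be a complete multipartite graph with at least 4 vertices and at least one edge, and let G′ be the graph obtained by attaching a 4-cycle to G at an arbitrary edge {i,j} of G. Then the edge polytope 𝒫_{G′} is both type I decomposable and type II decomposable. -/

import Mathlib

/-- For an edge `e = {i,j}` of a graph on `[d]`, `rho e = 𝐞ᵢ + 𝐞ⱼ ∈ ℝ^d`. -/
noncomputable def rho {d : ℕ} (e : Sym2 (Fin d)) : Fin d → ℝ :=
  Sym2.lift ⟨fun i j => Pi.single i 1 + Pi.single j 1, fun _ _ => add_comm _ _⟩ e

/-- The edge polytope of a graph `G` on `[d]`: the convex hull of `{ρ(e) : e ∈ E(G)}`. -/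
noncomputable def edgePolytope {d : ℕ} (G : SimpleGraph (Fin d)) : Set (Fin d → ℝ) :=
  convexHull ℝ (rho '' G.edgeSet)

/-- A set is integral if all its extreme points have integer coordinates. -/
def IsIntegralSet {d : ℕ} (Q : Set (Fin d → ℝ)) : Prop :=
  ∀ x ∈ Q.extremePoints ℝ, ∀ i, ∃ n : ℤ, x i = (n : ℝ)

/-- The hyperplane `{x : ∑ aᵢxᵢ = c}` is a separating hyperplane of `𝒫_G`: it meets
`𝒫_G \ ∂𝒫_G` (the intrinsic interior), and both closed half-space slices are integral. -/
def IsSepHyperplane {d : ℕ} (G : SimpleGraph (Fin d)) (a : Fin d → ℝ) (c : ℝ) : Prop :=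
  a ≠ 0 ∧
  (∃ x ∈ intrinsicInterior ℝ (edgePolytope G), ∑ i, a i * x i = c) ∧
  IsIntegralSet (edgePolytope G ∩ {x | c ≤ ∑ i, a i * x i}) ∧
  IsIntegralSet (edgePolytope G ∩ {x | ∑ i, a i * x i ≤ c})

/-- `𝒫_G` is decomposable if it has a separating hyperplane. -/
def Decomposable {d : ℕ} (G : SimpleGraph (Fin d)) : Prop :=
  ∃ a c, IsSepHyperplane G a c

/-- Type I decomposability: a separating hyperplane through `0` with all `aᵢ ∈ {1,-1}`. -/
def TypeIDecomposable {d : ℕ} (G : SimpleGraph (Fin d)) : Prop :=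
  ∃ a : Fin d → ℝ, (∀ i, a i = 1 ∨ a i = -1) ∧ IsSepHyperplane G a 0

/-- Type II decomposability: a separating hyperplane through `0` with all `aᵢ ∈ {0,1,-1}`,
some `aᵢ = 0`, and no edge with signature `{1,1}` or `{-1,-1}`. -/
def TypeIIDecomposable {d : ℕ} (G : SimpleGraph (Fin d)) : Prop :=
  ∃ a : Fin d → ℝ, (∀ i, a i = 0 ∨ a i = 1 ∨ a i = -1) ∧ (∃ i, a i = 0) ∧
    (∀ i j, G.Adj i j → ¬(a i = 1 ∧ a j = 1) ∧ ¬(a i = -1 ∧ a j = -1)) ∧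
    IsSepHyperplane G a 0

/-- Attaching a 4-cycle to `G` at the edge `{i,j}`: add two new vertices `x₁ = d`, `x₂ = d+1`
and the three edges `{i,x₁}`, `{x₁,x₂}`, `{x₂,j}`. -/
def attachFourCycle {d : ℕ} (G : SimpleGraph (Fin d)) (i j : Fin d) :
    SimpleGraph (Fin (d + 2)) :=
  SimpleGraph.fromEdgeSet
    ((Sym2.map (Fin.castLE (by omega : d ≤ d + 2))) '' G.edgeSet ∪
      {s(Fin.castLE (by omega) i, (⟨d, by omega⟩ : Fin (d + 2))),
       s((⟨d, by omega⟩ : Fin (d + 2)), (⟨d + 1, by omega⟩ : Fin (d + 2))),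
       s((⟨d + 1, by omega⟩ : Fin (d + 2)), Fin.castLE (by omega) j)})

/-!
An extreme point of the slice of a convex hull by a half-space `0 ≤ l` lies on a segment between two
of the generating points. If those points `v`, `w` are on opposite sides of the hyperplane and
`v + w = g + h` for two generating points `g`, `h` on the hyperplane, then `l v + l w = 0`, so the
segment crosses the hyperplane at the midpoint of `v` and `w`, which is also the midpoint of `g` and
`h`. Hence no new extreme points arise.

For an edge polytope such an exchange is a 4-cycle in which a positive edge and a negative edge are
opposite and the other two edges have weight zero. After a 4-cycle `i, x₁, x₂, j` is attached to a
complete multipartite graph, every edge disjoint from `{i, j}` is opposite to it in some 4-cycle, so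
the weights `-1` on `i`, `j` and `1` elsewhere give type I. With the weights `1` on `x₁`, `-1` on
`x₂` and `0` elsewhere, the only positive edge `{i, x₁}` and the only negative edge `{x₂, j}` are
opposite in the attached 4-cycle, which gives type II.
-/

section Convex

variable {𝕜 E F : Type*} [Field 𝕜] [LinearOrder 𝕜] [AddCommGroup E] [Module 𝕜 E]
  [AddCommGroup F] [Module 𝕜 F] {s : Set E} {x : E}

theorem openSegment_subset_intrinsicInterior [TopologicalSpace E] [IsTopologicalAddGroup E]
    [ContinuousConstSMul 𝕜 E] (hs : Convex 𝕜 s) {q : E} (hx : x ∈ intrinsicInterior 𝕜 s)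
    (hq : q ∈ s) : openSegment 𝕜 x q ⊆ intrinsicInterior 𝕜 s := by
  obtain ⟨x, hx, rfl⟩ := hx
  rintro _ ⟨α, β, hα, hβ, hαβ, rfl⟩
  let q' : affineSpan 𝕜 s := ⟨q, subset_affineSpan 𝕜 s hq⟩
  have : Nonempty (affineSpan 𝕜 s) := ⟨q'⟩
  have : ContinuousConstSMul 𝕜 (affineSpan 𝕜 s).direction :=
    ⟨fun c => (continuous_subtype_val.const_smul c).subtype_mk _⟩
  have hcoe (y : affineSpan 𝕜 s) : (AffineMap.homothety q' α y : E) = α • (y : E) + β • q := by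
    rw [eq_sub_of_add_eq' hαβ, AffineMap.homothety_apply]
    change α • ((y : E) - q) + q = _
    module
  have hopen : IsOpen (AffineMap.homothety q' α '' interior ((↑) ⁻¹' s)) :=
    AffineMap.homothety_isOpenMap q' α hα.ne' _ isOpen_interior
  have hsub : AffineMap.homothety q' α '' interior ((↑) ⁻¹' s) ⊆ ((↑) ⁻¹' s) := by
    rintro _ ⟨y, hy, rfl⟩
    rw [Set.mem_preimage, hcoe]
    exact hs (interior_subset (s := Subtype.val ⁻¹' s) hy) hq hα.le hβ.le hαβ
  exact ⟨_, interior_maximal hsub hopen ⟨x, hx, rfl⟩, hcoe x⟩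

theorem exists_mem_intrinsicInterior_apply_eq_zero {E : Type*} [NormedAddCommGroup E]
    [NormedSpace ℝ E] [FiniteDimensional ℝ E] {s : Set E} (hs : Convex ℝ s) (l : E →ₗ[ℝ] ℝ)
    {p q : E} (hp : p ∈ s) (hq : q ∈ s) (hlp : 0 < l p) (hlq : l q < 0) :
    ∃ x ∈ intrinsicInterior ℝ s, l x = 0 := by
  obtain ⟨x, hx⟩ := Set.Nonempty.intrinsicInterior hs ⟨p, hp⟩
  have exists_zero_towards {r : E} (hr : r ∈ s) (h : 0 ∈ openSegment ℝ (l x) (l r)) :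
      ∃ y ∈ intrinsicInterior ℝ s, l y = 0 := by
    rw [← LinearMap.coe_toAffineMap, ← image_openSegment] at h
    obtain ⟨y, hy, hly⟩ := h
    exact ⟨y, openSegment_subset_intrinsicInterior hs hx hr hy, hly⟩
  rcases lt_trichotomy (l x) 0 with h | h | h
  · exact exists_zero_towards hp (by simpa [openSegment_eq_Ioo (h.trans hlp)] using ⟨h, hlp⟩)
  · exact ⟨x, hx, h⟩
  · refine exists_zero_towards hq ?_
    rw [openSegment_symm, openSegment_eq_Ioo (hlq.trans h)]
    exact ⟨hlq, h⟩

variable [IsStrictOrderedRing 𝕜]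

theorem exists_pos_forall_mul_abs_le {ι : Type*} [Finite ι] {w : ι → 𝕜} (hw : ∀ i, 0 < w i)
    (δ : ι → 𝕜) : ∃ ε > 0, ∀ i, ε * |δ i| ≤ w i := by
  obtain ⟨M, hM⟩ := (Set.finite_range fun i => |δ i| / w i).bddAbove
  refine ⟨(max M 1)⁻¹, by positivity, fun i => ?_⟩
  rw [inv_mul_le_iff₀ (by positivity), ← div_le_iff₀ (hw i)]
  exact (hM ⟨i, rfl⟩).trans (le_max_left M 1)

/-- A form of Dubins' theorem. An affinely independent combination of more than `finrank 𝕜 F + 1`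
points can be perturbed in both directions without changing its image under `L`. -/
theorem exists_finset_card_le_of_mem_extremePoints [Module.Finite 𝕜 F] (L : E →ₗ[𝕜] F) {K : Set F}
    (hx : x ∈ (convexHull 𝕜 s ∩ L ⁻¹' K).extremePoints 𝕜) :
    ∃ t : Finset E, ↑t ⊆ s ∧ t.card ≤ Module.finrank 𝕜 F + 1 ∧ x ∈ convexHull 𝕜 (t : Set E) := by
  classical
  obtain ⟨⟨hxs, hxK⟩, hext⟩ := mem_extremePoints_iff_left.1 hx
  obtain ⟨ι, _, z, w, hzs, hz, hw, hw1, hwx⟩ := eq_pos_convex_span_of_mem_convexHull hxs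
  refine ⟨Finset.univ.image z, by simpa using hzs, Finset.card_image_le.trans ?_, ?_⟩
  swap
  · exact hwx ▸ (convex_convexHull 𝕜 _).sum_mem (fun i _ => (hw i).le) hw1 fun i _ =>
      subset_convexHull 𝕜 _ (by simp)
  by_contra! hcard
  have hdep : ¬LinearIndependent 𝕜 fun i => ((1 : 𝕜), L (z i)) := fun h => by
    have := h.fintype_card_le_finrank
    rw [Module.finrank_prod, Module.finrank_self] at this
    rw [Finset.card_univ] at hcard
    omega
  obtain ⟨δ, hδ, i₀, hi₀⟩ := Fintype.not_linearIndependent_iff.1 hdep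
  simp only [Prod.smul_mk, smul_eq_mul, mul_one, Prod.ext_iff, Prod.fst_sum, Prod.snd_sum,
    Prod.fst_zero, Prod.snd_zero] at hδ
  obtain ⟨hδ1, hδL⟩ := hδ
  obtain ⟨ε, hε, hεw⟩ := exists_pos_forall_mul_abs_le hw δ
  set u := ∑ i, δ i • z i with hu
  have hmem (c : 𝕜) (hc : |c| = ε) : x + c • u ∈ convexHull 𝕜 s ∩ L ⁻¹' K := by
    constructor
    · have : x + c • u = ∑ i, (w i + c * δ i) • z i := by
        simp [hu, ← hwx, add_smul, mul_smul, Finset.sum_add_distrib, Finset.smul_sum]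
      rw [this]
      refine (convex_convexHull 𝕜 s).sum_mem (fun i _ => ?_) ?_ fun i _ =>
        subset_convexHull 𝕜 s (hzs ⟨i, rfl⟩)
      · have := (abs_mul c (δ i)).trans_le (hc ▸ hεw i)
        linarith [neg_le_of_abs_le this]
      · rw [Finset.sum_add_distrib, ← Finset.mul_sum, hw1, hδ1, mul_zero, add_zero]
    · simpa [hu, map_sum, hδL] using hxK
  have hxu : x + ε • u = x := by
    refine hext _ (hmem ε (abs_of_pos hε)) _ (hmem (-ε) (by rw [abs_neg, abs_of_pos hε]))
      ⟨1 / 2, 1 / 2, by norm_num, by norm_num, by norm_num, by module⟩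
  have hu0 : u = 0 := (smul_eq_zero.1 (add_eq_left.1 hxu)).resolve_left hε.ne'
  exact hi₀ (affineIndependent_iff.1 hz Finset.univ δ hδ1 hu0 i₀ (Finset.mem_univ _))

theorem exists_mem_segment_of_mem_extremePoints (l : E →ₗ[𝕜] 𝕜) {K : Set 𝕜}
    (hx : x ∈ (convexHull 𝕜 s ∩ l ⁻¹' K).extremePoints 𝕜) :
    ∃ v ∈ s, ∃ w ∈ s, x ∈ segment 𝕜 v w := by
  classical
  obtain ⟨t, hts, htcard, hxt⟩ := exists_finset_card_le_of_mem_extremePoints l hx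
  rw [Module.finrank_self] at htcard
  have ht0 : t.card ≠ 0 := Finset.card_ne_zero.2 (by simpa using convexHull_nonempty_iff.1 ⟨x, hxt⟩)
  obtain ht | ht : t.card = 1 ∨ t.card = 2 := by omega
  · obtain ⟨v, rfl⟩ := Finset.card_eq_one.1 ht
    have hv : v ∈ s := hts (by simp)
    exact ⟨v, hv, v, hv, by simpa using hxt⟩
  · obtain ⟨v, w, -, rfl⟩ := Finset.card_eq_two.1 ht
    exact ⟨v, hts (by simp), w, hts (by simp), by simpa [convexHull_pair] using hxt⟩

theorem mem_segment_midpoint_of_apply_nonneg (l : E →ₗ[𝕜] 𝕜) {v w : E} (hlv : 0 < l v)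
    (hvw : l v + l w = 0) (hx : x ∈ segment 𝕜 v w) (hlx : 0 ≤ l x) :
    x ∈ segment 𝕜 v (midpoint 𝕜 v w) := by
  obtain ⟨α, β, -, hβ, hαβ, rfl⟩ := hx
  have hlx' : 0 ≤ (α - β) * l v := by
    simp only [map_add, map_smul, smul_eq_mul] at hlx
    linear_combination hlx + β * hvw
  have hβα : 0 ≤ α - β := nonneg_of_mul_nonneg_left hlx' hlv
  refine ⟨α - β, 2 * β, hβα, by positivity, by linear_combination hαβ, ?_⟩
  rw [midpoint_eq_smul_add, invOf_eq_inv]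
  module

theorem extremePoints_convexHull_inter_nonneg_subset (l : E →ₗ[𝕜] 𝕜)
    (hexch : ∀ v ∈ s, ∀ w ∈ s, 0 < l v → l w < 0 →
      ∃ g ∈ s, ∃ h ∈ s, l g = 0 ∧ l h = 0 ∧ v + w = g + h) :
    (convexHull 𝕜 s ∩ {x | 0 ≤ l x}).extremePoints 𝕜 ⊆ s := by
  intro x hx
  obtain ⟨v, hv, w, hw, hxvw⟩ := exists_mem_segment_of_mem_extremePoints (K := Set.Ici 0) l hx
  wlog hwv : l w ≤ l v generalizing v w
  · exact this w hw v hv (segment_symm 𝕜 v w ▸ hxvw) (le_of_not_ge hwv)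
  obtain ⟨hxQ, hext⟩ := mem_extremePoints_iff_forall_segment.1 hx
  have mem_slice {y : E} (hy : y ∈ s) (hly : 0 ≤ l y) : y ∈ convexHull 𝕜 s ∩ {x | 0 ≤ l x} :=
    ⟨subset_convexHull 𝕜 s hy, hly⟩
  have mem_of_segment {y z : E} (hy : y ∈ s) (hz : z ∈ s) (hly : 0 ≤ l y) (hlz : 0 ≤ l z)
      (h : x ∈ segment 𝕜 y z) : x ∈ s := by
    rcases hext y (mem_slice hy hly) z (mem_slice hz hlz) h with rfl | rfl
    exacts [hy, hz]
  rcases le_or_gt 0 (l w) with hlw | hlw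
  · exact mem_of_segment hv hw (hlw.trans hwv) hlw hxvw
  rcases le_or_gt (l v) 0 with hlv | hlv
  · obtain ⟨α, β, hα, hβ, hαβ, rfl⟩ := hxvw
    have hlx : 0 ≤ α * l v + β * l w := by simpa using hxQ.2
    obtain rfl : β = 0 := by nlinarith
    obtain rfl : α = 1 := by linarith
    simpa using hv
  obtain ⟨g, hg, h, hh, hlg, hlh, hvw⟩ := hexch v hv w hw hlv hlw
  have hm : midpoint 𝕜 v w = midpoint 𝕜 g h := by
    rw [midpoint_eq_smul_add, midpoint_eq_smul_add, hvw]
  have hm_slice : midpoint 𝕜 v w ∈ convexHull 𝕜 s ∩ {x | 0 ≤ l x} := by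
    refine ⟨(convex_convexHull 𝕜 s).midpoint_mem (subset_convexHull 𝕜 s hv)
      (subset_convexHull 𝕜 s hw), ?_⟩
    simp [hm, midpoint_eq_smul_add, hlg, hlh]
  have hlvw : l v + l w = 0 := by rw [← map_add, hvw, map_add, hlg, hlh, add_zero]
  rcases hext v (mem_slice hv hlv.le) _ hm_slice
    (mem_segment_midpoint_of_apply_nonneg l hlv hlvw hxvw hxQ.2) with rfl | hmx
  · exact hv
  · exact mem_of_segment hg hh hlg.ge hlh.ge (hmx ▸ hm ▸ midpoint_mem_segment g h)

end Convex

section CrossMatched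

variable {V : Type*} {G : SimpleGraph V} {e f : Sym2 V} {i j : V}

/-- `e` and `f` are cross matched in `G` if `G` matches the endpoints of `e` with those of `f`; when
`e` and `f` are disjoint edges of `G`, this says that they are opposite edges of a 4-cycle. The
other two edges of the 4-cycle have the same `ρ`-sum as `e` and `f`. -/
def CrossMatched (G : SimpleGraph V) (e f : Sym2 V) : Prop :=
  ∃ u v w z, e = s(u, v) ∧ f = s(w, z) ∧ G.Adj u w ∧ G.Adj v z

theorem CrossMatched.symm : CrossMatched G e f → CrossMatched G f e := by
  rintro ⟨u, v, w, z, he, hf, huw, hvz⟩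
  exact ⟨w, z, u, v, hf, he, huw.symm, hvz.symm⟩

theorem CrossMatched.map {W : Type*} {H : SimpleGraph W} (φ : G →g H) :
    CrossMatched G e f → CrossMatched H (e.map φ) (f.map φ) := by
  rintro ⟨u, v, w, z, rfl, rfl, huw, hvz⟩
  exact ⟨φ u, φ v, φ w, φ z, rfl, rfl, φ.map_adj huw, φ.map_adj hvz⟩

theorem crossMatched_of_adj_left {v : V} (hij : G.Adj i j) (hiv : G.Adj i v) :
    CrossMatched G s(i, v) s(i, j) :=
  ⟨i, v, j, i, rfl, Sym2.eq_swap, hij, hiv.symm⟩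

theorem crossMatched_of_adj_iff_ne {ι : Type*} {p : V → ι}
    (hp : ∀ u v, G.Adj u v ↔ p u ≠ p v) (he : e ∈ G.edgeSet) (hf : f ∈ G.edgeSet) :
    CrossMatched G e f := by
  induction e with | _ u v
  induction f with | _ w z
  simp only [SimpleGraph.mem_edgeSet, hp] at he hf
  by_cases h : p u ≠ p w ∧ p v ≠ p z
  · exact ⟨u, v, w, z, rfl, rfl, (hp _ _).2 h.1, (hp _ _).2 h.2⟩
  · exact ⟨u, v, z, w, rfl, Sym2.eq_swap, (hp _ _).2 (by grind), (hp _ _).2 (by grind)⟩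

end CrossMatched

section SeparatingHyperplane

variable {d : ℕ} {G : SimpleGraph (Fin d)} {a : Fin d → ℝ}

/-- The spanning subgraph of `G` whose edges are those with `ρ(e)` on the hyperplane `a ⬝ᵥ x = 0`,
used to express that an exchange of edges lands on that hyperplane. -/
def zeroWeightSubgraph (G : SimpleGraph (Fin d)) (a : Fin d → ℝ) : SimpleGraph (Fin d) where
  Adj u v := G.Adj u v ∧ a u + a v = 0
  symm := ⟨fun _ _ h => ⟨h.1.symm, by rw [add_comm, h.2]⟩⟩
  loopless := ⟨fun _ h => h.1.ne rfl⟩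

theorem zeroWeightSubgraph_neg : zeroWeightSubgraph G (-a) = zeroWeightSubgraph G a := by
  ext u v
  simp [zeroWeightSubgraph, ← neg_add_rev, add_comm]

/-- Every edge of positive weight `a u + a v` can be exchanged against every edge of negative weight
for two edges of weight zero: a condition on `a` under which `𝒫_G` has no new vertices on the
hyperplane `a ⬝ᵥ x = 0`. -/
def IsExchangeWeighting (G : SimpleGraph (Fin d)) (a : Fin d → ℝ) : Prop :=
  ∀ e ∈ G.edgeSet, ∀ f ∈ G.edgeSet, 0 < a ⬝ᵥ rho e → a ⬝ᵥ rho f < 0 →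
    CrossMatched (zeroWeightSubgraph G a) e f

theorem IsExchangeWeighting.neg (ha : IsExchangeWeighting G a) : IsExchangeWeighting G (-a) := by
  intro e he f hf hae haf
  rw [neg_dotProduct] at hae haf
  rw [zeroWeightSubgraph_neg]
  exact (ha f hf e he (neg_neg_iff_pos.1 haf) (neg_pos.1 hae)).symm

theorem dotProduct_rho (a : Fin d → ℝ) (u v : Fin d) : a ⬝ᵥ rho s(u, v) = a u + a v := by
  simp [rho, dotProduct_add]

theorem exists_int_rho_apply (e : Sym2 (Fin d)) (k : Fin d) : ∃ n : ℤ, rho e k = n := by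
  induction e with | _ u v
  exact ⟨(Pi.single u 1 + Pi.single v 1 : Fin d → ℤ) k, by simp [rho, Pi.single_apply]⟩

theorem CrossMatched.exists_rho_add_rho_eq {e f : Sym2 (Fin d)}
    (hef : CrossMatched (zeroWeightSubgraph G a) e f) :
    ∃ g ∈ G.edgeSet, ∃ h ∈ G.edgeSet,
      a ⬝ᵥ rho g = 0 ∧ a ⬝ᵥ rho h = 0 ∧ rho e + rho f = rho g + rho h := by
  obtain ⟨u, v, w, z, rfl, rfl, ⟨huw, huw0⟩, ⟨hvz, hvz0⟩⟩ := hef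
  refine ⟨s(u, w), huw, s(v, z), hvz, ?_, ?_, ?_⟩
  · rw [dotProduct_rho, huw0]
  · rw [dotProduct_rho, hvz0]
  · exact add_add_add_comm _ _ _ _

theorem IsExchangeWeighting.isIntegralSet_inter_nonneg (ha : IsExchangeWeighting G a) :
    IsIntegralSet (edgePolytope G ∩ {x | 0 ≤ a ⬝ᵥ x}) := by
  have hsub : (edgePolytope G ∩ {x | 0 ≤ a ⬝ᵥ x}).extremePoints ℝ ⊆ rho '' G.edgeSet := by
    refine extremePoints_convexHull_inter_nonneg_subset (dotProductBilin ℝ ℝ a) ?_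
    rintro _ ⟨e, he, rfl⟩ _ ⟨f, hf, rfl⟩ hae haf
    obtain ⟨g, hg, h, hh, hag, hah, hsum⟩ := (ha e he f hf hae haf).exists_rho_add_rho_eq
    exact ⟨_, ⟨g, hg, rfl⟩, _, ⟨h, hh, rfl⟩, hag, hah, hsum⟩
  intro x hx
  obtain ⟨e, -, rfl⟩ := hsub hx
  exact exists_int_rho_apply e

theorem IsExchangeWeighting.isSepHyperplane (ha : IsExchangeWeighting G a)
    (hpos : ∃ e ∈ G.edgeSet, 0 < a ⬝ᵥ rho e) (hneg : ∃ e ∈ G.edgeSet, a ⬝ᵥ rho e < 0) :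
    IsSepHyperplane G a 0 := by
  obtain ⟨e, he, hae⟩ := hpos
  obtain ⟨f, hf, haf⟩ := hneg
  refine ⟨?_, ?_, ha.isIntegralSet_inter_nonneg, ?_⟩
  · rintro rfl
    simp at hae
  · exact exists_mem_intrinsicInterior_apply_eq_zero (convex_convexHull ℝ _)
      (dotProductBilin ℝ ℝ a) (subset_convexHull ℝ _ ⟨e, he, rfl⟩)
      (subset_convexHull ℝ _ ⟨f, hf, rfl⟩) hae haf
  · have := ha.neg.isIntegralSet_inter_nonneg
    simp only [neg_dotProduct, neg_nonneg] at this
    exact this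

theorem typeIDecomposable_of_crossMatched (hsign : ∀ k, a k = 1 ∨ a k = -1)
    (hcross : ∀ e ∈ G.edgeSet, ∀ f ∈ G.edgeSet, (∀ k ∈ e, a k = 1) → (∀ k ∈ f, a k = -1) →
      CrossMatched G e f)
    (hpos : ∃ e ∈ G.edgeSet, ∀ k ∈ e, a k = 1) (hneg : ∃ e ∈ G.edgeSet, ∀ k ∈ e, a k = -1) :
    TypeIDecomposable G := by
  have pos_iff (e : Sym2 (Fin d)) : 0 < a ⬝ᵥ rho e ↔ ∀ k ∈ e, a k = 1 := by
    induction e with | _ u v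
    rw [dotProduct_rho, Sym2.ball]
    rcases hsign u with hu | hu <;> rcases hsign v with hv | hv <;> norm_num [hu, hv]
  have neg_iff (e : Sym2 (Fin d)) : a ⬝ᵥ rho e < 0 ↔ ∀ k ∈ e, a k = -1 := by
    induction e with | _ u v
    rw [dotProduct_rho, Sym2.ball]
    rcases hsign u with hu | hu <;> rcases hsign v with hv | hv <;> norm_num [hu, hv]
  have hexch : IsExchangeWeighting G a := by
    intro e he f hf hae haf
    rw [pos_iff] at hae
    rw [neg_iff] at haf
    obtain ⟨u, v, w, z, rfl, rfl, huw, hvz⟩ := hcross e he f hf hae haf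
    rw [Sym2.ball] at hae haf
    exact ⟨u, v, w, z, rfl, rfl, ⟨huw, by rw [hae.1, haf.1, add_neg_cancel]⟩,
      ⟨hvz, by rw [hae.2, haf.2, add_neg_cancel]⟩⟩
  simp only [← pos_iff, ← neg_iff] at hpos hneg
  exact ⟨a, hsign, hexch.isSepHyperplane hpos hneg⟩

theorem typeIDecomposable_of_forall_crossMatched {i j : Fin d} (hij : G.Adj i j)
    (hcross : ∀ e ∈ G.edgeSet, CrossMatched G e s(i, j))
    (hdisj : ∃ e ∈ G.edgeSet, i ∉ e ∧ j ∉ e) : TypeIDecomposable G := by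
  let a : Fin d → ℝ := fun k => if k = i ∨ k = j then -1 else 1
  have ha {k : Fin d} : a k = -1 ↔ k = i ∨ k = j := by
    simp only [a]
    split_ifs <;> norm_num [*]
  refine typeIDecomposable_of_crossMatched (a := a) (fun k => (ite_eq_or_eq _ _ _).symm)
    (fun e he f hf _ haf => ?_) ?_ ⟨s(i, j), hij, by simp [ha]⟩
  · have hfij : f = s(i, j) := by
      induction f with | _ w z
      have hwz := SimpleGraph.Adj.ne hf
      simp only [Sym2.ball, ha] at haf
      rw [Sym2.eq_iff]
      grind
    exact hfij ▸ hcross e he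
  · obtain ⟨e, he, hie, hje⟩ := hdisj
    exact ⟨e, he, fun k hk => if_neg (by rintro (rfl | rfl) <;> contradiction)⟩

theorem eq_mk_of_dotProduct_single_sub_single_pos {i x y : Fin d} (hx : G.neighborSet x = {i, y})
    {e : Sym2 (Fin d)} (he : e ∈ G.edgeSet)
    (hae : 0 < (Pi.single x 1 - Pi.single y 1 : Fin d → ℝ) ⬝ᵥ rho e) : e = s(i, x) := by
  have adj_x {v : Fin d} : G.Adj x v ↔ v = i ∨ v = y := by
    rw [← SimpleGraph.mem_neighborSet, hx, Set.mem_insert_iff, Set.mem_singleton_iff]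
  induction e with | _ u v
  rw [SimpleGraph.mem_edgeSet] at he
  rw [dotProduct_rho] at hae
  wlog hu : u = x generalizing u v
  · rw [Sym2.eq_swap]
    refine this v u he.symm (by rwa [add_comm]) ?_
    by_contra hv
    simp only [Pi.sub_apply, Pi.single_apply, hu, hv, if_false] at hae
    split_ifs at hae <;> linarith
  subst hu
  rcases adj_x.1 he with rfl | rfl
  · exact Sym2.eq_swap
  · simp [he.ne, he.ne'] at hae

theorem isExchangeWeighting_single_sub_single {i x y j : Fin d} (hij : G.Adj i j)
    (hx : G.neighborSet x = {i, y}) (hy : G.neighborSet y = {x, j}) (hiy : i ≠ y) (hjx : j ≠ x) :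
    IsExchangeWeighting G (Pi.single x 1 - Pi.single y 1) := by
  have hxi : G.Adj x i := by simp [← SimpleGraph.mem_neighborSet, hx]
  have hxy : G.Adj x y := by simp [← SimpleGraph.mem_neighborSet, hx]
  have hyj : G.Adj y j := by simp [← SimpleGraph.mem_neighborSet, hy]
  intro e he f hf hae haf
  have hei : e = s(i, x) := eq_mk_of_dotProduct_single_sub_single_pos hx he hae
  have hfj : f = s(j, y) := by
    refine eq_mk_of_dotProduct_single_sub_single_pos (by rw [hy, Set.pair_comm]) hf ?_
    rwa [← neg_sub, neg_dotProduct, neg_pos]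
  exact ⟨i, x, j, y, hei, hfj, ⟨hij, by simp [hxi.ne', hiy, hjx, hyj.ne']⟩,
    ⟨hxy, by simp [hxy.ne, hxy.ne']⟩⟩

theorem typeIIDecomposable_of_fourCycle {i x y j : Fin d} (hij : G.Adj i j)
    (hx : G.neighborSet x = {i, y}) (hy : G.neighborSet y = {x, j}) (hiy : i ≠ y) (hjx : j ≠ x) :
    TypeIIDecomposable G := by
  have hxi : G.Adj x i := by simp [← SimpleGraph.mem_neighborSet, hx]
  have hxy : G.Adj x y := by simp [← SimpleGraph.mem_neighborSet, hx]
  have hyj : G.Adj y j := by simp [← SimpleGraph.mem_neighborSet, hy]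
  have hexch := isExchangeWeighting_single_sub_single hij hx hy hiy hjx
  have ha {k : Fin d} (h₁ : k ≠ x) (h₂ : k ≠ y) :
      (Pi.single x 1 - Pi.single y 1 : Fin d → ℝ) k = 0 := by simp [h₁, h₂]
  set a : Fin d → ℝ := Pi.single x 1 - Pi.single y 1 with ha_def
  have hax : a x = 1 := by simp [ha_def, hxy.ne]
  have hay : a y = -1 := by simp [ha_def, hxy.ne']
  have hai : a i = 0 := ha hxi.ne' hiy
  have haj : a j = 0 := ha hjx hyj.ne'
  have ha_cases (k : Fin d) : k = x ∨ k = y ∨ a k = 0 := by tauto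
  have eq_x {k : Fin d} (hk : a k = 1) : k = x := by
    rcases ha_cases k with rfl | rfl | h <;> first | rfl | linarith
  have eq_y {k : Fin d} (hk : a k = -1) : k = y := by
    rcases ha_cases k with rfl | rfl | h <;> first | rfl | linarith
  refine ⟨a, fun k => ?_, ⟨i, hai⟩, fun u v huv => ⟨?_, ?_⟩, hexch.isSepHyperplane
    ⟨s(x, i), hxi, ?_⟩ ⟨s(y, j), hyj, ?_⟩⟩
  · rcases ha_cases k with rfl | rfl | hk
    exacts [.inr (.inl hax), .inr (.inr hay), .inl hk]
  · rintro ⟨hu, hv⟩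
    exact huv.ne ((eq_x hu).trans (eq_x hv).symm)
  · rintro ⟨hu, hv⟩
    exact huv.ne ((eq_y hu).trans (eq_y hv).symm)
  · rw [dotProduct_rho, hax, hai]
    norm_num
  · rw [dotProduct_rho, hay, haj]
    norm_num

end SeparatingHyperplane

section AttachFourCycle

variable {d : ℕ} {G : SimpleGraph (Fin d)} {i j : Fin d}

theorem edgeSet_attachFourCycle (G : SimpleGraph (Fin d)) (i j : Fin d) :
    (attachFourCycle G i j).edgeSet = Sym2.map (Fin.castAdd 2) '' G.edgeSet ∪
      {s(Fin.castAdd 2 i, Fin.natAdd d 0), s(Fin.natAdd d 0, Fin.natAdd d 1),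
        s(Fin.natAdd d 1, Fin.castAdd 2 j)} := by
  rw [attachFourCycle, SimpleGraph.edgeSet_fromEdgeSet]
  refine sdiff_eq_left.2 (Set.disjoint_right.2 ?_)
  rintro e hdiag (⟨e, he, rfl⟩ | rfl | rfl | rfl)
  · rw [Sym2.mem_diagSet, Sym2.isDiag_map (Fin.castLE_injective _)] at hdiag
    exact G.not_isDiag_of_mem_edgeSet he hdiag
  all_goals
    simp only [Sym2.mem_diagSet, Sym2.mk_isDiag_iff, Fin.ext_iff, Fin.val_castLE] at hdiag
    omega

theorem attachFourCycle_adj {u v : Fin (d + 2)} : (attachFourCycle G i j).Adj u v ↔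
    s(u, v) ∈ Sym2.map (Fin.castAdd 2) '' G.edgeSet ∨
      s(u, v) = s(Fin.castAdd 2 i, Fin.natAdd d 0) ∨
      s(u, v) = s(Fin.natAdd d 0, Fin.natAdd d 1) ∨
      s(u, v) = s(Fin.natAdd d 1, Fin.castAdd 2 j) := by
  rw [← SimpleGraph.mem_edgeSet, edgeSet_attachFourCycle]
  rfl

/-- The inclusion of `G` in `attachFourCycle G i j`; the new vertices `x₁`, `x₂` are
`Fin.natAdd d 0` and `Fin.natAdd d 1`. -/
def attachFourCycleHom (G : SimpleGraph (Fin d)) (i j : Fin d) : G →g attachFourCycle G i j where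
  toFun := Fin.castAdd 2
  map_rel' {u v} huv := attachFourCycle_adj.2 (.inl ⟨s(u, v), huv, rfl⟩)

theorem castAdd_ne_natAdd {m n : ℕ} (k : Fin m) (l : Fin n) : Fin.castAdd n k ≠ Fin.natAdd m l :=
  Fin.ne_of_lt ((Fin.castAdd_lt n k).trans_le (Fin.le_coe_natAdd m l))

theorem mk_natAdd_notMem_image_map_castAdd {m n : ℕ} (S : Set (Sym2 (Fin m))) (k : Fin n)
    (v : Fin (m + n)) : s(Fin.natAdd m k, v) ∉ Sym2.map (Fin.castAdd n) '' S := by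
  rintro ⟨e, -, he⟩
  obtain ⟨l, -, hl⟩ := Sym2.mem_map.1 (he ▸ Sym2.mem_mk_left (Fin.natAdd m k) v)
  exact castAdd_ne_natAdd l k hl

theorem neighborSet_attachFourCycle_natAdd_zero : (attachFourCycle G i j).neighborSet
    (Fin.natAdd d 0) = {Fin.castAdd 2 i, Fin.natAdd d 1} := by
  ext v
  rw [SimpleGraph.mem_neighborSet, attachFourCycle_adj,
    or_iff_right (mk_natAdd_notMem_image_map_castAdd _ _ _)]
  simp [(castAdd_ne_natAdd _ _).symm]

theorem neighborSet_attachFourCycle_natAdd_one : (attachFourCycle G i j).neighborSet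
    (Fin.natAdd d 1) = {Fin.natAdd d 0, Fin.castAdd 2 j} := by
  ext v
  rw [SimpleGraph.mem_neighborSet, attachFourCycle_adj,
    or_iff_right (mk_natAdd_notMem_image_map_castAdd _ _ _)]
  simp [(castAdd_ne_natAdd _ _).symm]

theorem crossMatched_attachFourCycle (hij : G.Adj i j)
    (hcross : ∀ e ∈ G.edgeSet, CrossMatched G e s(i, j)) :
    ∀ e ∈ (attachFourCycle G i j).edgeSet,
      CrossMatched (attachFourCycle G i j) e s(Fin.castAdd 2 i, Fin.castAdd 2 j) := by
  have hij' : (attachFourCycle G i j).Adj (Fin.castAdd 2 i) (Fin.castAdd 2 j) :=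
    (attachFourCycleHom G i j).map_adj hij
  have hix : (attachFourCycle G i j).Adj (Fin.castAdd 2 i) (Fin.natAdd d 0) :=
    attachFourCycle_adj.2 (.inr (.inl rfl))
  have hyj : (attachFourCycle G i j).Adj (Fin.natAdd d 1) (Fin.castAdd 2 j) :=
    attachFourCycle_adj.2 (.inr (.inr (.inr rfl)))
  rw [edgeSet_attachFourCycle]
  rintro _ (⟨e, he, rfl⟩ | rfl | rfl | rfl)
  · exact (hcross e he).map (attachFourCycleHom G i j)
  · exact crossMatched_of_adj_left hij' hix
  · exact ⟨_, _, _, _, rfl, rfl, hix.symm, hyj⟩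
  · rw [Sym2.eq_swap, Sym2.eq_swap (a := Fin.castAdd 2 i)]
    exact crossMatched_of_adj_left hij'.symm hyj.symm

theorem typeIDecomposable_attachFourCycle (hij : G.Adj i j)
    (hcross : ∀ e ∈ G.edgeSet, CrossMatched G e s(i, j)) :
    TypeIDecomposable (attachFourCycle G i j) := by
  refine typeIDecomposable_of_forall_crossMatched ((attachFourCycleHom G i j).map_adj hij)
    (crossMatched_attachFourCycle hij hcross) ⟨s(Fin.natAdd d 0, Fin.natAdd d 1),
      attachFourCycle_adj.2 (.inr (.inr (.inl rfl))), ?_, ?_⟩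
  all_goals simp [attachFourCycleHom, castAdd_ne_natAdd]

theorem typeIIDecomposable_attachFourCycle (hij : G.Adj i j) :
    TypeIIDecomposable (attachFourCycle G i j) :=
  typeIIDecomposable_of_fourCycle ((attachFourCycleHom G i j).map_adj hij)
    neighborSet_attachFourCycle_natAdd_zero neighborSet_attachFourCycle_natAdd_one
    (castAdd_ne_natAdd i 1) (castAdd_ne_natAdd j 0)

end AttachFourCycle

theorem attachFourCycle_multipartite_typeI_typeII_general {d : ℕ} (G : SimpleGraph (Fin d))
    (i j : Fin d) (hij : G.Adj i j) (hcross : ∀ e ∈ G.edgeSet, CrossMatched G e s(i, j)) :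
    TypeIDecomposable (attachFourCycle G i j) ∧ TypeIIDecomposable (attachFourCycle G i j) :=
  ⟨typeIDecomposable_attachFourCycle hij hcross, typeIIDecomposable_attachFourCycle hij⟩

/-- Let `G` be a complete multipartite graph on `[d]`, `d ≥ 4`, with at least
one edge `{i,j}`, and let `G'` be obtained by attaching a 4-cycle to `G` at `{i,j}`. Then
`𝒫_{G'}` is both type I and type II decomposable. -/
theorem attachFourCycle_multipartite_typeI_typeII {d : ℕ} (G : SimpleGraph (Fin d))
    (hd : 4 ≤ d) (hmp : ∃ p : Fin d → ℕ, ∀ i j, G.Adj i j ↔ p i ≠ p j)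
    (i j : Fin d) (hij : G.Adj i j) :
    TypeIDecomposable (attachFourCycle G i j) ∧
      TypeIIDecomposable (attachFourCycle G i j) :=
  let ⟨_, hp⟩ := hmp
  attachFourCycle_multipartite_typeI_typeII_general G i j hij fun _ he =>
    crossMatched_of_adj_iff_ne hp he hij
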